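/- Let n ≥ 3 and 1 ≤ k ≤ n−1 be integers, and let G be a simple connected graph on n vertices with edge connectivity κ′(G) ≤ k. Then Π2(G) ≤ k^k · (n−1)^{k(n−1)} · (n−2)^{(n−2)(n−k−1)}, with equality if and only if G is isomorphic to K_n^k. -/

import Mathlib

open SimpleGraph Finset

/-- Degree of a vertex (as `Nat.card` of its neighbor set). -/
noncomputable def mdeg {V : Type*} (G : SimpleGraph V) (v : V) : ℕ :=
  Nat.card (G.neighborSet v)

/-- First multiplicative Zagreb index. -/
noncomputable def mZ1 {V : Type*} [Fintype V] (G : SimpleGraph V) : ℕ :=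
  ∏ v : V, (mdeg G v) ^ 2

/-- Second multiplicative Zagreb index. -/
noncomputable def mZ2 {V : Type*} [Fintype V] (G : SimpleGraph V) : ℕ :=
  ∏ v : V, (mdeg G v) ^ (mdeg G v)

/-- The edge connectivity of `G` is at most `k`: some set of at most `k` edges of `G`
disconnects it. -/
def EdgeConnAtMost {V : Type*} (G : SimpleGraph V) (k : ℕ) : Prop :=
  ∃ F : Finset (Sym2 V), (↑F : Set (Sym2 V)) ⊆ G.edgeSet ∧ F.card ≤ k ∧
    ¬ (G.deleteEdges (↑F : Set (Sym2 V))).Connected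

/-- The graph `K_n^k`: vertex `0` is joined to the first `k` vertices of the complete
graph on the remaining `n - 1` vertices. -/
def KnK (n k : ℕ) : SimpleGraph (Fin n) :=
  SimpleGraph.fromRel (fun u v => (u.val ≠ 0 ∧ v.val ≠ 0) ∨ (u.val = 0 ∧ 1 ≤ v.val ∧ v.val ≤ k))

/-- The function `d ↦ d log d` on natural numbers, so that `mZ2` is the exponential of a sum. -/
noncomputable def mulLog (d : ℕ) : ℝ := d * Real.log d

lemma mulLog_second_difference_pos (t : ℕ) :
    0 < mulLog (t + 2) - 2 * mulLog (t + 1) + mulLog t := by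
  have h := Real.strictConvexOn_mul_log.2 (Set.mem_Ici.2 (Nat.cast_nonneg t))
    (Set.mem_Ici.2 (by positivity : (0 : ℝ) ≤ t + 2)) (by simp)
    (one_half_pos (α := ℝ)) (one_half_pos (α := ℝ)) (by norm_num)
  simp only [smul_eq_mul] at h
  rw [show (1 / 2 : ℝ) * t + 1 / 2 * (t + 2) = t + 1 by ring] at h
  simp only [mulLog]
  push_cast
  linarith

lemma sum_second_difference (φ : ℕ → ℝ) (d : ℕ) :
    ∑ t ∈ range d, (φ (t + 2) - 2 * φ (t + 1) + φ t) = (φ (d + 1) - φ d) - (φ 1 - φ 0) := by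
  induction d with
  | zero => simp
  | succ d ih => rw [sum_range_succ, ih]; ring

/-- A function on `ℕ` vanishing at `0` and `1` is a combination of truncated linear functions. -/
lemma eq_sum_second_difference_mul (φ : ℕ → ℝ) (h0 : φ 0 = 0) (h1 : φ 1 = 0) (N d : ℕ)
    (hd : d ≤ N) :
    φ d = ∑ t ∈ range N, (φ (t + 2) - 2 * φ (t + 1) + φ t) * ((d - (t + 1) : ℕ) : ℝ) := by
  induction d with
  | zero => simp [h0]
  | succ d ih =>
    have key : ∀ t, ((d + 1 - (t + 1) : ℕ) : ℝ)
        = ((d - (t + 1) : ℕ) : ℝ) + if t < d then 1 else 0 := by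
      intro t
      split_ifs with h
      · rw [show d + 1 - (t + 1) = d - (t + 1) + 1 by omega]; push_cast; rfl
      · rw [show d + 1 - (t + 1) = d - (t + 1) by omega]; simp
    have hf : (range N).filter (fun t => t < d) = range d := by
      ext t; simp; omega
    simp_rw [key, mul_add, sum_add_distrib, mul_ite, mul_one, mul_zero]
    rw [← ih (by omega), ← sum_filter, hf, sum_second_difference, h0, h1]
    ring

lemma sum_mulLog_eq {V : Type*} [Fintype V] (d : V → ℕ) (N : ℕ) (hd : ∀ v, d v ≤ N) :
    ∑ v, mulLog (d v) = ∑ t ∈ range N,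
      (mulLog (t + 2) - 2 * mulLog (t + 1) + mulLog t) *
        ((∑ v, (d v - (t + 1)) : ℕ) : ℝ) := by
  simp_rw [Nat.cast_sum, mul_sum]
  rw [sum_comm]
  exact sum_congr rfl fun v _ => eq_sum_second_difference_mul mulLog (by simp [mulLog])
    (by simp [mulLog]) N (d v) (hd v)

lemma sum_tsub_le_of_weaklyMajorized {V : Type*} [Fintype V] (d e : V → ℕ)
    (h : ∀ T : Finset V, ∃ U : Finset V, #U = #T ∧ ∑ v ∈ T, d v ≤ ∑ v ∈ U, e v) (s : ℕ) :
    ∑ v, (d v - s) ≤ ∑ v, (e v - s) := by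
  classical
  obtain ⟨U, hU, hTU⟩ := h (univ.filter fun v => s < d v)
  have h1 : ∑ v, (d v - s) + #U * s = ∑ v ∈ univ.filter (fun v => s < d v), d v := by
    rw [hU, ← smul_eq_mul, ← sum_const, sum_filter, sum_filter, ← sum_add_distrib]
    refine sum_congr rfl fun v _ => ?_
    split_ifs <;> omega
  have h2 : ∑ v ∈ U, e v ≤ ∑ v ∈ U, (e v - s) + #U * s := by
    rw [← smul_eq_mul, ← sum_const, ← sum_add_distrib]
    exact sum_le_sum fun v _ => by omega
  have h3 : ∑ v ∈ U, (e v - s) ≤ ∑ v, (e v - s) :=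
    sum_le_sum_of_subset (subset_univ U)
  omega

lemma sum_mulLog_le {V : Type*} [Fintype V] (d e : V → ℕ)
    (h : ∀ T : Finset V, ∃ U : Finset V, #U = #T ∧ ∑ v ∈ T, d v ≤ ∑ v ∈ U, e v) :
    ∑ v, mulLog (d v) ≤ ∑ v, mulLog (e v) := by
  rw [sum_mulLog_eq d (∑ v, (d v + e v)) fun v =>
      (Nat.le_add_right _ (e v)).trans (single_le_sum (f := fun v => d v + e v) (by simp)
        (mem_univ v)),
    sum_mulLog_eq e (∑ v, (d v + e v)) fun v =>
      (Nat.le_add_left _ (d v)).trans (single_le_sum (f := fun v => d v + e v) (by simp)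
        (mem_univ v))]
  refine sum_le_sum fun t _ => mul_le_mul_of_nonneg_left ?_ (mulLog_second_difference_pos t).le
  exact_mod_cast sum_tsub_le_of_weaklyMajorized d e h (t + 1)

lemma sum_mulLog_lt {V : Type*} [Fintype V] (d e : V → ℕ)
    (h : ∀ T : Finset V, ∃ U : Finset V, #U = #T ∧ ∑ v ∈ T, d v ≤ ∑ v ∈ U, e v)
    (hd : ∀ v, 1 ≤ d v) (he : ∀ v, 1 ≤ e v) (hlt : ∑ v, d v < ∑ v, e v) :
    ∑ v, mulLog (d v) < ∑ v, mulLog (e v) := by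
  rw [sum_mulLog_eq d (∑ v, (d v + e v)) fun v =>
      (Nat.le_add_right _ (e v)).trans (single_le_sum (f := fun v => d v + e v) (by simp)
        (mem_univ v)),
    sum_mulLog_eq e (∑ v, (d v + e v)) fun v =>
      (Nat.le_add_left _ (d v)).trans (single_le_sum (f := fun v => d v + e v) (by simp)
        (mem_univ v))]
  refine sum_lt_sum (fun t _ => mul_le_mul_of_nonneg_left ?_
    (mulLog_second_difference_pos t).le) ⟨0, ?_, ?_⟩
  · exact_mod_cast sum_tsub_le_of_weaklyMajorized d e h (t + 1)
  · rw [mem_range, sum_add_distrib]; omega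
  · refine mul_lt_mul_of_pos_left ?_ (mulLog_second_difference_pos 0)
    have aux : ∀ g : V → ℕ, (∀ v, 1 ≤ g v) →
        ∑ v, (g v - (0 + 1)) + Fintype.card V = ∑ v, g v := by
      intro g hg
      rw [← card_univ, card_eq_sum_ones, ← sum_add_distrib]
      exact sum_congr rfl fun v _ => by have := hg v; omega
    have h1 := aux d hd
    have h2 := aux e he
    exact_mod_cast (by omega : ∑ v, (d v - (0 + 1)) < ∑ v, (e v - (0 + 1)))

lemma prod_pow_self_pos {V : Type*} [Fintype V] (d : V → ℕ) : 0 < ∏ v, d v ^ d v :=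
  prod_pos fun _ _ => Nat.pow_self_pos

lemma log_prod_pow_self {V : Type*} [Fintype V] (d : V → ℕ) :
    Real.log ((∏ v, d v ^ d v : ℕ) : ℝ) = ∑ v, mulLog (d v) := by
  rw [Nat.cast_prod, Real.log_prod]
  · exact sum_congr rfl fun v _ => by simp [mulLog]
  · intro v _
    exact_mod_cast (Nat.pow_self_pos (n := d v)).ne'

lemma prod_pow_self_le {V : Type*} [Fintype V] (d e : V → ℕ)
    (h : ∀ T : Finset V, ∃ U : Finset V, #U = #T ∧ ∑ v ∈ T, d v ≤ ∑ v ∈ U, e v) :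
    ∏ v, d v ^ d v ≤ ∏ v, e v ^ e v := by
  have := sum_mulLog_le d e h
  rw [← log_prod_pow_self, ← log_prod_pow_self, Real.log_le_log_iff
    (by exact_mod_cast prod_pow_self_pos d) (by exact_mod_cast prod_pow_self_pos e)] at this
  exact_mod_cast this

lemma prod_pow_self_lt {V : Type*} [Fintype V] (d e : V → ℕ)
    (h : ∀ T : Finset V, ∃ U : Finset V, #U = #T ∧ ∑ v ∈ T, d v ≤ ∑ v ∈ U, e v)
    (hd : ∀ v, 1 ≤ d v) (he : ∀ v, 1 ≤ e v) (hlt : ∑ v, d v < ∑ v, e v) :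
    ∏ v, d v ^ d v < ∏ v, e v ^ e v := by
  have := sum_mulLog_lt d e h hd he hlt
  rw [← log_prod_pow_self, ← log_prod_pow_self, Real.log_lt_log_iff
    (by exact_mod_cast prod_pow_self_pos d) (by exact_mod_cast prod_pow_self_pos e)] at this
  exact_mod_cast this

/-- The degree sequence of `KnK n k`. -/
def degKnK (n k : ℕ) (v : Fin n) : ℕ :=
  if v.val = 0 then k else if v.val ≤ k then n - 1 else n - 2

lemma mdeg_eq_card_filter {V : Type*} [Fintype V] (G : SimpleGraph V) [DecidableRel G.Adj]
    (v : V) : mdeg G v = #{w | G.Adj v w} := by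
  rw [mdeg, Nat.card_eq_fintype_card, card_neighborSet_eq_degree, ← card_neighborFinset_eq_degree,
    neighborFinset_eq_filter]

lemma mdeg_iso {V W : Type*} {G : SimpleGraph V} {H : SimpleGraph W} (φ : G ≃g H) (v : V) :
    mdeg H (φ v) = mdeg G v :=
  (Nat.card_congr (φ.mapNeighborSet v)).symm

lemma mZ2_iso {V W : Type*} [Fintype V] [Fintype W] {G : SimpleGraph V} {H : SimpleGraph W}
    (φ : G ≃g H) : mZ2 G = mZ2 H :=
  Fintype.prod_equiv φ.toEquiv _ _ fun v => by
    change _ = mdeg H (φ v) ^ mdeg H (φ v)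
    rw [mdeg_iso]

lemma KnK_adj {n k : ℕ} (u v : Fin n) : (KnK n k).Adj u v ↔ u ≠ v ∧
    ((u.val ≠ 0 ∧ v.val ≠ 0) ∨ (u.val = 0 ∧ v.val ≤ k) ∨ (v.val = 0 ∧ u.val ≤ k)) := by
  rw [KnK, fromRel_adj, Ne, Fin.ext_iff]
  omega

lemma card_fin_filter_Icc (n k : ℕ) (hk : k < n) :
    #{v : Fin n | 1 ≤ v.val ∧ v.val ≤ k} = k := by
  have h : ({v : Fin n | 1 ≤ v.val ∧ v.val ≤ k} : Finset (Fin n)).map Fin.valEmbedding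
      = Finset.Icc 1 k := by
    ext x
    simp only [mem_map, mem_filter, mem_univ, true_and, Fin.valEmbedding_apply, Finset.mem_Icc]
    exact ⟨by rintro ⟨v, hv, rfl⟩; exact hv, fun hx => ⟨⟨x, by omega⟩, hx, rfl⟩⟩
  rw [← card_map Fin.valEmbedding, h]
  simp

lemma mdeg_KnK (n k : ℕ) (hn : 3 ≤ n) (hk : k ≤ n - 1) (v : Fin n) :
    mdeg (KnK n k) v = degKnK n k v := by
  classical
  rw [mdeg_eq_card_filter, degKnK]
  split_ifs with h0 hk'
  · refine Eq.trans ?_ (card_fin_filter_Icc n k (by omega))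
    congr 1
    ext w
    simp only [mem_filter, mem_univ, true_and, KnK_adj, Ne, Fin.ext_iff]
    omega
  · rw [show ({w | (KnK n k).Adj v w} : Finset (Fin n)) = univ.erase v by
      ext w
      simp only [mem_filter, mem_univ, true_and, KnK_adj, Ne, Fin.ext_iff, mem_erase, and_true]
      omega]
    simp
  · rw [show ({w | (KnK n k).Adj v w} : Finset (Fin n)) = (univ.erase v).erase ⟨0, by omega⟩ by
      ext w
      simp only [mem_filter, mem_univ, true_and, KnK_adj, Ne, Fin.ext_iff, mem_erase, and_true]
      omega]
    rw [card_erase_of_mem (by simp [Fin.ext_iff]; omega)]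
    simp
    omega

lemma prod_degKnK (n k : ℕ) (hn : 3 ≤ n) (hk : k ≤ n - 1) :
    ∏ v : Fin n, degKnK n k v ^ degKnK n k v =
      k ^ k * (n - 1) ^ (k * (n - 1)) * (n - 2) ^ ((n - 2) * (n - k - 1)) := by
  have hc := card_fin_filter_Icc n k (by omega)
  have hu : (univ : Finset (Fin n)) = insert ⟨0, by omega⟩
      (({v : Fin n | 1 ≤ v.val ∧ v.val ≤ k} : Finset (Fin n)) ∪
        ({v : Fin n | k < v.val} : Finset (Fin n))) := by
    ext v
    simp only [mem_univ, mem_insert, mem_union, mem_filter, true_and, Fin.ext_iff, true_iff]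
    omega
  have hdisj : Disjoint ({v : Fin n | 1 ≤ v.val ∧ v.val ≤ k} : Finset (Fin n))
      ({v : Fin n | k < v.val} : Finset (Fin n)) := by
    rw [disjoint_filter]; intros; omega
  have hnot : (⟨0, by omega⟩ : Fin n) ∉ (({v : Fin n | 1 ≤ v.val ∧ v.val ≤ k} : Finset (Fin n)) ∪
        ({v : Fin n | k < v.val} : Finset (Fin n))) := by simp
  have hc2 : #({v : Fin n | k < v.val} : Finset (Fin n)) = n - k - 1 := by
    have := congrArg card hu
    rw [card_insert_of_notMem hnot, card_union_of_disjoint hdisj, hc, card_univ,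
      Fintype.card_fin] at this
    omega
  rw [hu, prod_insert hnot, prod_union hdisj,
    prod_congr (s₁ := ({v : Fin n | 1 ≤ v.val ∧ v.val ≤ k} : Finset (Fin n))) rfl
      (g := fun _ => (n - 1) ^ (n - 1)),
    prod_congr (s₁ := ({v : Fin n | k < v.val} : Finset (Fin n))) rfl
      (g := fun _ => (n - 2) ^ (n - 2)), prod_const, prod_const, hc, hc2, ← pow_mul, ← pow_mul,
      mul_comm (n - 1) k]
  · simp [degKnK, mul_assoc]
  · intro v hv
    simp only [mem_filter, mem_univ, true_and] at hv
    rw [degKnK, if_neg (by omega), if_neg (by omega)]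
  · intro v hv
    simp only [mem_filter, mem_univ, true_and] at hv
    rw [degKnK, if_neg (by omega), if_pos (by omega)]

/-- The `j` largest entries of the degree sequence of `KnK n k`, for `j < n`. -/
lemma sum_degKnK_Icc (n k j : ℕ) (hn : 3 ≤ n) (hj : j ≤ n - 1) :
    ∑ v ∈ ({v : Fin n | 1 ≤ v.val ∧ v.val ≤ j} : Finset (Fin n)), degKnK n k v =
      j * (n - 2) + min j k := by
  have h : ∀ v ∈ ({v : Fin n | 1 ≤ v.val ∧ v.val ≤ j} : Finset (Fin n)),
      degKnK n k v = (n - 2) + if v.val ≤ k then 1 else 0 := by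
    intro v hv
    simp only [mem_filter, mem_univ, true_and] at hv
    rw [degKnK, if_neg (by omega)]
    split_ifs <;> omega
  rw [sum_congr rfl h, sum_add_distrib, sum_const, card_fin_filter_Icc n j (by omega),
    smul_eq_mul, ← card_filter, filter_filter]
  rw [← card_fin_filter_Icc n (min j k) (by omega)]
  congr 2
  ext v
  simp only [mem_filter, mem_univ, true_and]
  omega

lemma sum_degKnK (n k : ℕ) (hn : 3 ≤ n) (hk : k ≤ n - 1) :
    ∑ v : Fin n, degKnK n k v = (n - 1) * (n - 2) + 2 * k := by
  have h := sum_degKnK_Icc n k (n - 1) hn le_rfl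
  have hu : (univ : Finset (Fin n)) = insert ⟨0, by omega⟩
      ({v : Fin n | 1 ≤ v.val ∧ v.val ≤ n - 1} : Finset (Fin n)) := by
    ext v
    simp only [mem_univ, mem_insert, mem_filter, true_and, Fin.ext_iff, true_iff]
    omega
  rw [hu, sum_insert (by simp), h, min_eq_right hk]
  simp [degKnK]
  omega

open Classical in
/-- The number of neighbours of `v` on the same side of the cut `(S, Sᶜ)` as `v`. -/
noncomputable def insideDeg {V : Type*} [Fintype V] (G : SimpleGraph V) (S : Finset V) (v : V) :
    ℕ := #{w | G.Adj v w ∧ (w ∈ S ↔ v ∈ S)}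

open Classical in
/-- The number of neighbours of `v` on the other side of the cut `(S, Sᶜ)`. -/
noncomputable def crossDeg {V : Type*} [Fintype V] (G : SimpleGraph V) (S : Finset V) (v : V) :
    ℕ := #{w | G.Adj v w ∧ ¬ (w ∈ S ↔ v ∈ S)}

section Cut

variable {V : Type*} [Fintype V] (G : SimpleGraph V) (S : Finset V)

lemma mdeg_eq_insideDeg_add_crossDeg (v : V) :
    mdeg G v = insideDeg G S v + crossDeg G S v := by
  classical
  rw [mdeg_eq_card_filter, insideDeg, crossDeg, ← filter_filter, ← filter_filter,
    card_filter_add_card_filter_not]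

variable [DecidableEq V]

lemma insideDeg_le {v : V} (hv : v ∈ S) : insideDeg G S v ≤ #S - 1 := by
  rw [← card_erase_of_mem hv]
  refine card_le_card fun w hw => ?_
  simp only [mem_filter, mem_univ, true_and, hv, iff_true] at hw
  exact mem_erase.2 ⟨hw.1.ne', hw.2⟩

lemma adj_of_insideDeg_eq {v w : V} (hv : v ∈ S) (h : insideDeg G S v = #S - 1) (hw : w ∈ S)
    (hne : w ≠ v) : G.Adj v w := by
  classical
  rw [← card_erase_of_mem hv] at h
  have hsub : ({w | G.Adj v w ∧ (w ∈ S ↔ v ∈ S)} : Finset V) ⊆ S.erase v := fun w hw => by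
    simp only [mem_filter, mem_univ, true_and, hv, iff_true] at hw
    exact mem_erase.2 ⟨hw.1.ne', hw.2⟩
  have heq := eq_of_subset_of_card_le hsub (le_of_eq (by rw [← h, insideDeg]; congr!))
  have : w ∈ S.erase v := mem_erase.2 ⟨hne, hw⟩
  rw [← heq] at this
  exact (mem_filter.1 this).2.1

lemma mdeg_le (v : V) : mdeg G v ≤ Fintype.card V - 1 := by
  classical
  rw [mdeg_eq_card_filter, ← card_univ, ← card_erase_of_mem (mem_univ v)]
  exact card_le_card fun w hw => mem_erase.2 ⟨(mem_filter.1 hw).2.ne', mem_univ w⟩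

variable {G S}

lemma sum_crossDeg_le {F : Finset (Sym2 V)}
    (hF : ∀ x y, G.Adj x y → x ∈ S → y ∉ S → s(x, y) ∈ F) :
    ∑ v ∈ S, crossDeg G S v ≤ #F := by
  classical
  simp only [crossDeg]
  rw [← card_sigma]
  refine card_le_card_of_injOn (fun p => s(p.1, p.2)) ?_ ?_
  · rintro ⟨x, y⟩ h
    simp only [coe_sigma, Set.mem_sigma_iff, mem_coe, mem_filter, mem_univ, true_and] at h
    exact hF x y h.2.1 h.1 (by tauto)
  · rintro ⟨x, y⟩ h ⟨x', y'⟩ h' heq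
    simp only [coe_sigma, Set.mem_sigma_iff, mem_coe, mem_filter, mem_univ, true_and] at h h'
    rcases Sym2.eq_iff.1 heq with ⟨rfl, rfl⟩ | ⟨rfl, rfl⟩
    · rfl
    · tauto

lemma sum_mdeg_inter_le {k : ℕ} (hk : ∑ v ∈ S, crossDeg G S v ≤ k) (T : Finset V) :
    ∑ v ∈ T ∩ S, mdeg G v ≤ #(T ∩ S) * (#S - 1) + k := by
  simp_rw [mdeg_eq_insideDeg_add_crossDeg G S, sum_add_distrib]
  refine add_le_add ?_ ((sum_le_sum_of_subset inter_subset_right).trans hk)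
  rw [← smul_eq_mul]
  exact sum_le_card_nsmul _ _ _ fun v hv => insideDeg_le G S (mem_of_mem_inter_right hv)

/-- The degree sums of a graph with a small edge cut are dominated by those of `KnK n k`. -/
lemma sum_mdeg_le {n k : ℕ} (hn : 3 ≤ n) (hV : Fintype.card V = n)
    (hS : S.Nonempty) (hSc : #S ≤ #Sᶜ)
    (h1 : ∑ v ∈ S, crossDeg G S v ≤ k) (h2 : ∑ v ∈ Sᶜ, crossDeg G Sᶜ v ≤ k)
    (T : Finset V) (hT : #T ≤ n - 1) :
    ∑ v ∈ T, mdeg G v ≤ #T * (n - 2) + min #T k := by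
  rcases le_or_gt #T k with hTk | hTk
  · rw [min_eq_left hTk]
    calc _ ≤ #T • (n - 1) := sum_le_card_nsmul _ _ _ fun v _ => hV ▸ mdeg_le G v
      _ = _ := by
        rw [smul_eq_mul, show n - 1 = n - 2 + 1 by omega]; ring
  · rw [min_eq_right hTk.le]
    have hc : #S + #Sᶜ = n := by rw [card_add_card_compl, hV]
    have hpos := hS.card_pos
    have hTc : #(T ∩ S) + #(T ∩ Sᶜ) = #T := by
      rw [← sdiff_eq_inter_compl, card_inter_add_card_sdiff]
    have hsum : ∑ v ∈ T ∩ S, mdeg G v + ∑ v ∈ T ∩ Sᶜ, mdeg G v = ∑ v ∈ T, mdeg G v := by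
      rw [← sdiff_eq_inter_compl, sum_inter_add_sum_sdiff]
    have hA := sum_mdeg_inter_le h1 T
    have hB := sum_mdeg_inter_le h2 T
    rcases Nat.lt_or_ge 1 #S with h | h
    · have e1 : #(T ∩ S) * (#S - 1) ≤ #(T ∩ S) * (n - 3) := Nat.mul_le_mul_left _ (by omega)
      have e2 : #(T ∩ Sᶜ) * (#Sᶜ - 1) ≤ #(T ∩ Sᶜ) * (n - 3) := Nat.mul_le_mul_left _ (by omega)
      have e3 : #T * (n - 2) = #(T ∩ S) * (n - 3) + #(T ∩ Sᶜ) * (n - 3) + #T := by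
        rw [← add_mul, hTc, show n - 2 = n - 3 + 1 by omega]; ring
      omega
    · have hS1 : #S = 1 := by omega
      have hSc1 : #Sᶜ - 1 = n - 2 := by omega
      rw [hS1] at hA
      rw [hSc1] at hB
      rw [← hTc, add_mul]
      have hle : #(T ∩ S) ≤ 1 := hS1 ▸ card_le_card inter_subset_right
      rcases Nat.eq_zero_or_pos #(T ∩ S) with h0 | h0
      · rw [card_eq_zero] at h0
        rw [h0, sum_empty] at hsum
        omega
      · have e : #(T ∩ S) = 1 := by omega
        rw [e] at hA ⊢
        omega

lemma sum_mdeg_univ_le {k : ℕ}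
    (h1 : ∑ v ∈ S, crossDeg G S v ≤ k) (h2 : ∑ v ∈ Sᶜ, crossDeg G Sᶜ v ≤ k) :
    ∑ v, mdeg G v ≤ #S * (#S - 1) + #Sᶜ * (#Sᶜ - 1) + 2 * k := by
  have hA := sum_mdeg_inter_le h1 univ
  have hB := sum_mdeg_inter_le h2 univ
  rw [univ_inter] at hA hB
  rw [← sum_add_sum_compl S]
  omega

end Cut

lemma card_mul_pred_add_lt {a b n : ℕ} (ha : 2 ≤ a) (hb : 2 ≤ b) (h : a + b = n) :
    a * (a - 1) + b * (b - 1) < (n - 1) * (n - 2) := by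
  obtain ⟨a, rfl⟩ := Nat.exists_eq_add_of_le ha
  obtain ⟨b, rfl⟩ := Nat.exists_eq_add_of_le hb
  subst h
  rw [show 2 + a - 1 = a + 1 by omega, show 2 + b - 1 = b + 1 by omega,
    show 2 + a + (2 + b) - 1 = a + b + 3 by omega, show 2 + a + (2 + b) - 2 = a + b + 2 by omega]
  nlinarith [Nat.zero_le (a * b)]

/-- A graph of edge connectivity at most `k` has a vertex bipartition with at most `k` crossing
edges. -/
lemma EdgeConnAtMost.exists_cut {V : Type*} [Fintype V] [DecidableEq V] [Nonempty V]
    {G : SimpleGraph V} {k : ℕ} (h : EdgeConnAtMost G k) :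
    ∃ S : Finset V, S.Nonempty ∧ #S ≤ #Sᶜ ∧
      ∑ v ∈ S, crossDeg G S v ≤ k ∧ ∑ v ∈ Sᶜ, crossDeg G Sᶜ v ≤ k := by
  classical
  obtain ⟨F, -, hFk, hF⟩ := h
  rw [connected_iff, not_and_or] at hF
  have hF := hF.resolve_right (not_not.2 inferInstance)
  simp only [Preconnected, not_forall] at hF
  obtain ⟨u, v, huv⟩ := hF
  obtain ⟨S, hS⟩ : ∃ S : Finset V, ∀ w, w ∈ S ↔ (G.deleteEdges (F : Set (Sym2 V))).Reachable u w :=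
    ⟨univ.filter fun w => (G.deleteEdges (F : Set (Sym2 V))).Reachable u w, by simp⟩
  have hcut : ∀ x y, G.Adj x y → x ∈ S → y ∉ S → s(x, y) ∈ F := by
    intro x y hxy hx hy
    by_contra hn
    refine hy ((hS y).2 (((hS x).1 hx).trans (Adj.reachable ?_)))
    rw [deleteEdges_adj]
    exact ⟨hxy, by simpa using hn⟩
  have h1 := (sum_crossDeg_le hcut).trans hFk
  have h2 : ∑ w ∈ Sᶜ, crossDeg G Sᶜ w ≤ k := by
    refine (sum_crossDeg_le (F := F) fun x y hxy hx hy => ?_).trans hFk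
    rw [Sym2.eq_swap]
    exact hcut y x hxy.symm (by simpa using hy) (by simpa using hx)
  rcases le_total #S #Sᶜ with hle | hle
  · exact ⟨S, ⟨u, (hS u).2 (Reachable.refl u)⟩, hle, h1, h2⟩
  · refine ⟨Sᶜ, ⟨v, ?_⟩, ?_, h2, ?_⟩
    · rw [mem_compl, hS]; exact huv
    · rwa [compl_compl]
    · rwa [compl_compl]

/-- A graph in which a vertex of degree `k` is attached to a complete graph is `KnK n k`. -/
lemma nonempty_iso_KnK {n k : ℕ} (hn : 3 ≤ n) (hk : k ≤ n - 1) (G : SimpleGraph (Fin n))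
    (v : Fin n) (hv : mdeg G v = k) (hG : ∀ x y, x ≠ v → y ≠ v → x ≠ y → G.Adj x y) :
    Nonempty (G ≃g KnK n k) := by
  classical
  rw [mdeg_eq_card_filter] at hv
  let e₁ : {x // G.Adj v x} ≃ {x : Fin n // 1 ≤ x.val ∧ x.val ≤ k} :=
    Fintype.equivOfCardEq (by
      rw [Fintype.card_subtype, Fintype.card_subtype, hv, card_fin_filter_Icc n k (by omega)])
  let p : Equiv.Perm (Fin n) := e₁.extendSubtype
  have hp : ∀ x, (1 ≤ (p x).val ∧ (p x).val ≤ k) ↔ G.Adj v x := fun x =>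
    ⟨fun h => by_contra fun hx => e₁.extendSubtype_not_mem x hx h,
      fun h => e₁.extendSubtype_mem x h⟩
  let e : Equiv.Perm (Fin n) := p.trans (Equiv.swap (p v) ⟨0, by omega⟩)
  have hev : (e v).val = 0 := by simp [e]
  have he : ∀ x, (1 ≤ (e x).val ∧ (e x).val ≤ k) ↔ G.Adj v x := by
    intro x
    have hv' := (hp v).not.2 (G.irrefl)
    rw [← hp x, Equiv.trans_apply, Equiv.swap_apply_def]
    split_ifs with h h'
    · rw [h]; simp only [hv', iff_false]; simp
    · rw [h']; simp only [hv', false_iff]; simp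
    · rfl
  have he0 : ∀ x, (e x).val = 0 ↔ x = v := fun x => by
    rw [← hev, ← Fin.ext_iff, e.injective.eq_iff]
  refine ⟨⟨e, ?_⟩⟩
  intro x y
  rw [KnK_adj, e.injective.ne_iff]
  by_cases hxv : x = v
  · subst hxv
    rw [← he y, hev]
    have := he0 y
    by_cases hxy : y = x
    · simp [hxy, hev]
    · have := this.not.2 hxy
      simp only [ne_eq, Ne.symm hxy, not_false_eq_true, true_and, not_true_eq_false,
        false_and, false_or]
      omega
  by_cases hyv : y = v
  · subst hyv
    rw [G.adj_comm, ← he x, hev]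
    have := (he0 x).not.2 hxv
    simp only [ne_eq, hxv, not_false_eq_true, true_and, not_true_eq_false, and_false,
      false_or]
    omega
  · have h1 := (he0 x).not.2 hxv
    have h2 := (he0 y).not.2 hyv
    exact ⟨fun h => hG x y hxv hyv h.1, fun h => ⟨h.ne, Or.inl ⟨h1, h2⟩⟩⟩

lemma exists_sum_mdeg_le_sum_degKnK {n k : ℕ} (hn : 3 ≤ n)
    {G : SimpleGraph (Fin n)} {S : Finset (Fin n)} (hS : S.Nonempty) (hSc : #S ≤ #Sᶜ)
    (h1 : ∑ v ∈ S, crossDeg G S v ≤ k) (h2 : ∑ v ∈ Sᶜ, crossDeg G Sᶜ v ≤ k)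
    (htot : ∑ v, mdeg G v ≤ ∑ v, degKnK n k v) (T : Finset (Fin n)) :
    ∃ U : Finset (Fin n), #U = #T ∧ ∑ v ∈ T, mdeg G v ≤ ∑ v ∈ U, degKnK n k v := by
  by_cases hT : #T ≤ n - 1
  · refine ⟨({v : Fin n | 1 ≤ v.val ∧ v.val ≤ #T} : Finset (Fin n)),
      card_fin_filter_Icc n #T (by omega), ?_⟩
    rw [sum_degKnK_Icc n k #T hn hT]
    exact sum_mdeg_le hn (Fintype.card_fin n) hS hSc h1 h2 T hT
  · have hle := card_le_univ T
    rw [Fintype.card_fin] at hle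
    have hTu : T = univ := by
      rw [← card_eq_iff_eq_univ, Fintype.card_fin]; omega
    exact ⟨univ, by rw [hTu], by rwa [hTu]⟩

/-- A graph with the cut `({v}, {v}ᶜ)` and as many edges as `KnK n k` is isomorphic to it. -/
lemma nonempty_iso_KnK_of_sum_mdeg_eq {n k : ℕ} (hn : 3 ≤ n) (hk : k ≤ n - 1)
    {G : SimpleGraph (Fin n)} (v : Fin n)
    (h1 : ∑ x ∈ {v}, crossDeg G {v} x ≤ k) (h2 : ∑ x ∈ {v}ᶜ, crossDeg G {v}ᶜ x ≤ k)
    (htot : ∑ x, mdeg G x = (n - 1) * (n - 2) + 2 * k) : Nonempty (G ≃g KnK n k) := by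
  have hc : #({v}ᶜ : Finset (Fin n)) = n - 1 := by
    rw [card_compl, Fintype.card_fin, card_singleton]
  have hv : mdeg G v ≤ k := by
    have := insideDeg_le G {v} (mem_singleton_self v)
    rw [sum_singleton] at h1
    rw [mdeg_eq_insideDeg_add_crossDeg G {v}]
    simp only [card_singleton] at this
    omega
  have hin : ∀ x ∈ ({v}ᶜ : Finset (Fin n)), insideDeg G {v}ᶜ x ≤ n - 2 := fun x hx => by
    have := insideDeg_le G {v}ᶜ hx
    omega
  have hsum := sum_le_sum hin
  have hconst : ∑ x ∈ ({v}ᶜ : Finset (Fin n)), (n - 2) = (n - 1) * (n - 2) := by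
    rw [sum_const, hc, smul_eq_mul]
  rw [← sum_add_sum_compl {v}, sum_singleton,
    sum_congr rfl fun x _ => mdeg_eq_insideDeg_add_crossDeg G {v}ᶜ x, sum_add_distrib] at htot
  have heq := (sum_eq_sum_iff_of_le hin).1 (by omega)
  refine nonempty_iso_KnK hn hk G v (by omega) fun x y hx hy hxy => ?_
  have hx' : x ∈ ({v}ᶜ : Finset (Fin n)) := by simpa using hx
  exact adj_of_insideDeg_eq G {v}ᶜ hx' (by rw [heq x hx', hc]; omega) (by simpa using hy) hxy.symm

theorem stmt3 (n k : ℕ) (hn : 3 ≤ n) (hk1 : 1 ≤ k) (hk2 : k ≤ n - 1)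
    (G : SimpleGraph (Fin n)) (hG : G.Connected) (hκ' : EdgeConnAtMost G k) :
    mZ2 G ≤ k ^ k * (n - 1) ^ (k * (n - 1)) * (n - 2) ^ ((n - 2) * (n - k - 1)) ∧
      (mZ2 G = k ^ k * (n - 1) ^ (k * (n - 1)) * (n - 2) ^ ((n - 2) * (n - k - 1)) ↔
        Nonempty (G ≃g KnK n k)) := by
  have : Nonempty (Fin n) := ⟨⟨0, by omega⟩⟩
  have : Nontrivial (Fin n) := Fin.nontrivial_iff_two_le.2 (by omega)
  obtain ⟨S, hS, hSc, h1, h2⟩ := hκ'.exists_cut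
  have hcard : #S + #Sᶜ = n := by rw [card_add_card_compl, Fintype.card_fin]
  have hpos := hS.card_pos
  have hle := sum_mdeg_univ_le h1 h2
  have htot := sum_degKnK n k hn hk2
  have hone : #S = 1 → #S * (#S - 1) + #Sᶜ * (#Sᶜ - 1) = (n - 1) * (n - 2) := fun h => by
    rw [h, show #Sᶜ = n - 1 by omega, show n - 1 - 1 = n - 2 by omega]; simp
  have htwo : #S ≠ 1 → #S * (#S - 1) + #Sᶜ * (#Sᶜ - 1) < (n - 1) * (n - 2) := fun h =>
    card_mul_pred_add_lt (by omega) (by omega) hcard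
  have hdeg : ∑ v, mdeg G v ≤ ∑ v, degKnK n k v := by
    by_cases h : #S = 1
    · have := hone h; omega
    · have := htwo h; omega
  have hmaj := exists_sum_mdeg_le_sum_degKnK hn hS hSc h1 h2 hdeg
  rw [← prod_degKnK n k hn hk2]
  refine ⟨prod_pow_self_le _ _ hmaj, fun heq => ?_, fun ⟨φ⟩ => ?_⟩
  · have hnlt : ¬ ∑ v, mdeg G v < ∑ v, degKnK n k v := fun hlt =>
      (prod_pow_self_lt _ _ hmaj
        (fun v => by
          classical
          rw [mdeg, Nat.card_eq_fintype_card, card_neighborSet_eq_degree]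
          exact hG.preconnected.degree_pos_of_nontrivial v)
        (fun v => by rw [degKnK]; split_ifs <;> omega) hlt).ne heq
    have hS1 : #S = 1 := by
      by_contra h
      have := htwo h
      omega
    obtain ⟨v, rfl⟩ := card_eq_one.1 hS1
    exact nonempty_iso_KnK_of_sum_mdeg_eq hn hk2 v h1 h2 (by omega)
  · rw [mZ2_iso φ, mZ2]
    exact prod_congr rfl fun v _ => by rw [mdeg_KnK n k hn hk2]
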